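/- Let L be a lattice with a least element ⊥ and let a ∈ L be an atom of L that is also a neutral element of L. Then an element x ∈ L is a distributive element of L if and only if x ⊔ a is a distributive element of L. -/

import Mathlib

/-- An element `x` of a lattice `L` is neutral if for all `y, z ∈ L` one has
`(x ⊔ y) ⊓ (y ⊔ z) ⊓ (z ⊔ x) = (x ⊓ y) ⊔ (y ⊓ z) ⊔ (z ⊓ x)`. -/
def IsNeutralElement {L : Type*} [Lattice L] (x : L) : Prop :=
  ∀ y z : L, (x ⊔ y) ⊓ (y ⊔ z) ⊓ (z ⊔ x) = (x ⊓ y) ⊔ (y ⊓ z) ⊔ (z ⊓ x)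

def IsDistributiveElement {L : Type*} [Lattice L] (x : L) : Prop :=
  ∀ y z : L, x ⊔ (y ⊓ z) = (x ⊔ y) ⊓ (x ⊔ z)

theorem neutral_sup_inf {L : Type*} [Lattice L] {a : L} (hn : IsNeutralElement a) (y z : L) :
    a ⊔ (y ⊓ z) = (a ⊔ y) ⊓ (a ⊔ z) := by
  have h1 := hn (y ⊔ z) ((a ⊔ y) ⊓ (a ⊔ z))
  have h2 := hn y z
  set u := (a ⊔ y) ⊓ (a ⊔ z) with hu
  have hau : a ≤ u := le_inf le_sup_left le_sup_left
  have huy : u ≤ a ⊔ (y ⊔ z) := inf_le_left.trans (sup_le_sup_left le_sup_left _)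
  have e : (y ⊔ z) ⊓ u ≤ a ⊔ (y ⊓ z) := by
    have : (y ⊔ z) ⊓ u = (a ⊔ y) ⊓ (y ⊔ z) ⊓ (z ⊔ a) := by
      rw [hu, sup_comm z a]; ac_rfl
    rw [this, h2]
    exact sup_le (sup_le (inf_le_left.trans le_sup_left) le_sup_right)
      (inf_le_right.trans le_sup_left)
  apply le_antisymm
  · exact le_inf (sup_le_sup_left inf_le_left _) (sup_le_sup_left inf_le_right _)
  · have : u ≤ (a ⊔ (y ⊔ z)) ⊓ (y ⊔ z ⊔ u) ⊓ (u ⊔ a) :=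
      le_inf (le_inf huy le_sup_right) le_sup_left
    rw [h1] at this
    exact this.trans (sup_le (sup_le (inf_le_left.trans le_sup_left) e)
      (inf_le_right.trans le_sup_left))

theorem neutral_dual {L : Type*} [Lattice L] {a : L} (hn : IsNeutralElement a) :
    IsNeutralElement (L := Lᵒᵈ) (OrderDual.toDual a) :=
  fun y z => (hn (OrderDual.ofDual y) (OrderDual.ofDual z)).symm

theorem neutral_inf_sup {L : Type*} [Lattice L] {a : L} (hn : IsNeutralElement a) (y z : L) :
    a ⊓ (y ⊔ z) = (a ⊓ y) ⊔ (a ⊓ z) :=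
  neutral_sup_inf (L := Lᵒᵈ) (neutral_dual hn) (OrderDual.toDual y) (OrderDual.toDual z)

theorem neutral_cancel {L : Type*} [Lattice L] {a : L} (hn : IsNeutralElement a) {y z : L}
    (hle : y ≤ z) (h1 : a ⊔ y = a ⊔ z) (h2 : a ⊓ y = a ⊓ z) : y = z := by
  apply le_antisymm hle
  have h := hn y z
  have : z ≤ (a ⊔ y) ⊓ (y ⊔ z) ⊓ (z ⊔ a) :=
    le_inf (le_inf (h1 ▸ le_sup_right) le_sup_right) le_sup_left
  rw [h, inf_comm z a, ← h2] at this
  exact this.trans (sup_le (sup_le inf_le_right inf_le_left) inf_le_right)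

/-- If `a` is an atom and a neutral element of a lattice `L` with least element, then
an element `x ∈ L` is a distributive element of `L` if and only if `x ⊔ a` is. -/
theorem isDistributiveElement_sup_atom_iff {L : Type*} [Lattice L] [OrderBot L] (a : L)
    (ha : IsAtom a) (hn : IsNeutralElement a) (x : L) :
    IsDistributiveElement x ↔ IsDistributiveElement (x ⊔ a) := by
  constructor
  · intro hx y z
    rw [sup_assoc, neutral_sup_inf hn, hx, sup_assoc, sup_assoc]
  · intro hx y z
    apply neutral_cancel hn
    · exact le_inf (sup_le_sup_left inf_le_left _) (sup_le_sup_left inf_le_right _)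
    · rw [neutral_sup_inf hn (x ⊔ y), ← sup_assoc, ← sup_assoc, ← sup_assoc, sup_comm a x]
      exact hx y z
    · have hQ : a ⊓ ((x ⊔ y) ⊓ (x ⊔ z)) = (a ⊓ (x ⊔ y)) ⊓ (a ⊓ (x ⊔ z)) :=
        inf_inf_distrib_left _ _ _
      rw [hQ, neutral_inf_sup hn, neutral_inf_sup hn, neutral_inf_sup hn]
      rcases ha.le_iff.1 (inf_le_left : a ⊓ x ≤ a) with h | h
      · rw [h, bot_sup_eq, bot_sup_eq, bot_sup_eq, inf_inf_distrib_left]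
      · rw [h, sup_inf_self, sup_inf_self, sup_inf_self, inf_idem]
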